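/- Let d, ℓ, g be positive integers. Suppose a : {1,...,p} → ℤ>0 and b : {1,...,q} → ℤ>0 are partitions of d (i.e. a₁ + ⋯ + a_p = d and b₁ + ⋯ + b_q = d), and m : {1,...,ℓ} → ℤ>0 satisfies m₁ + ⋯ + m_ℓ = p + q − 2 + 2g and mᵢ + 1 ≤ d for every i. Then there exist three permutations π₁, π₂, π₃ in the symmetric group S_{ℓd} on {1, …, ℓd} such that: (1) π₁ π₂ π₃ = id; (2) the cycle type of π₁ (as a partition of ℓd, counting each fixed point as a part equal to 1) is (ℓa₁, …, ℓa_p), the cycle type of π₂ is (ℓb₁, …, ℓb_q), and the cycle type of π₃ is (m₁+1, …, m_ℓ+1, 1, …, 1); (3) the subgroup of S_{ℓd} generated by π₁, π₂, π₃ acts transitively on {1, 2, …, ℓd}. -/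

import Mathlib

/-!
Let `σ` permute `d` points with cycle lengths `a`. Multiplying `σ` successively by an
`(mᵢ + 1)`-cycle `τᵢ` for each `i` leads to a permutation with cycle lengths `b`: the first cycles
merge cycles of `σ`, the next one meets all the cycles that are left, which makes the group
transitive, and can be chosen to absorb the genus `g > 0`, and the remaining ones lead to `b`.

Spread the product `σ * τ₁ * ⋯ * τ_ℓ` over `ℓ` copies of the `d` points. The permutation `π₁` passes
cyclically through the copies and applies `σ` once per turn, and `π₃` acts as `τᵢ` on the `i`-th
copy. A full turn of `π₁` is `σ`, and one of `π₁ * π₃` is conjugate to `σ * τ₁ * ⋯ * τ_ℓ`, so the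
cycle lengths of these two are those of `a` and of `b` multiplied by `ℓ`.
-/

/-- The cycle type of a permutation of `Fin n`, as a partition of `n`:
the lengths of the cycles in the disjoint cycle decomposition, counting
each fixed point as a part equal to `1`. -/
def fullCycleType {n : ℕ} (σ : Equiv.Perm (Fin n)) : Multiset ℕ :=
  σ.cycleType + Multiset.replicate (n - σ.support.card) 1

section MarkedCycles

open Equiv Equiv.Perm

variable {X : Type*}

lemma sameCycle_of_forall_sameCycle_apply [Finite X] {f g : Perm X} {x y : X}
    (hxy : f.SameCycle x y)
    (hstep : ∀ z, f.SameCycle x z → g.SameCycle x z → g.SameCycle x (f z)) :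
    g.SameCycle x y := by
  obtain ⟨n, rfl⟩ := hxy.exists_nat_pow_eq
  clear hxy
  induction n with
  | zero => exact SameCycle.refl g x
  | succ n ih =>
    rw [pow_succ', mul_apply]
    exact hstep _ (sameCycle_pow_right.2 (SameCycle.refl f x)) ih

lemma isCycleOn_of_mapsTo_of_sameCycle [Finite X] {σ : Perm X} {s : Set X}
    (hmaps : Set.MapsTo σ s s) (hsame : ∀ x ∈ s, ∀ y ∈ s, σ.SameCycle x y) : σ.IsCycleOn s :=
  ⟨(Set.Finite.injOn_iff_bijOn_of_mapsTo s.toFinite hmaps).1 σ.injective.injOn,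
    fun x hx y hy => hsame x hx y hy⟩

lemma mem_iff_mem_of_isCycleOn_of_sameCycle {σ : Perm X} {s : Set X} {x y : X}
    (hs : σ.IsCycleOn s) (h : σ.SameCycle x y) : x ∈ s ↔ y ∈ s := by
  obtain ⟨i, rfl⟩ := h
  refine ⟨fun hx => (hs.1.perm_zpow i).mapsTo hx, fun hx => ?_⟩
  simpa using (hs.1.perm_zpow (-i)).mapsTo hx

lemma isCycleOn_congr [Finite X] {σ τ : Perm X} {s : Set X} (hs : σ.IsCycleOn s)
    (h : Set.EqOn τ σ s) : τ.IsCycleOn s := by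
  refine isCycleOn_of_mapsTo_of_sameCycle (hs.1.mapsTo.congr h.symm) fun x hx y hy =>
    sameCycle_of_forall_sameCycle_apply (hs.2 hx hy) fun z hxz hxz' => ?_
  rw [← h ((mem_iff_mem_of_isCycleOn_of_sameCycle hs hxz).1 hx)]
  exact sameCycle_apply_right.2 hxz'

lemma swap_apply_of_notMem [DecidableEq X] {S : Finset X} {u v x : X} (hu : u ∈ S) (hv : v ∈ S)
    (hx : x ∉ S) : swap u v x = x :=
  swap_apply_of_ne_of_ne (ne_of_mem_of_not_mem hu hx).symm (ne_of_mem_of_not_mem hv hx).symm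

section MulSwap

variable [Finite X] [DecidableEq X] {σ : Perm X} {u v x y : X}

lemma sameCycle_mul_swap_of_not_sameCycle (h : ¬σ.SameCycle u v) :
    (σ * swap u v).SameCycle u v := by
  have hturn : (σ * swap u v).SameCycle (σ u) u := by
    refine sameCycle_of_forall_sameCycle_apply (f := σ)
      (sameCycle_apply_left.2 (SameCycle.refl σ u)) fun z hz hz' => ?_
    rcases eq_or_ne z u with rfl | hzu
    · exact SameCycle.refl _ _
    · have hzv : z ≠ v := by
        rintro rfl
        exact h (sameCycle_apply_left.1 hz)
      simpa [swap_apply_of_ne_of_ne hzu hzv] using sameCycle_apply_right.2 hz'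
  have hv : (σ * swap u v) v = σ u := by simp
  exact (sameCycle_apply_left.1 (hv ▸ hturn)).symm

lemma sameCycle_mul_swap_of_sameCycle (huv : (σ * swap u v).SameCycle u v)
    (h : σ.SameCycle x y) : (σ * swap u v).SameCycle x y := by
  refine sameCycle_of_forall_sameCycle_apply h fun z _ hz => ?_
  have hσ : σ z = (σ * swap u v) (swap u v z) := by simp
  rw [hσ, sameCycle_apply_right]
  rcases eq_or_ne z u with rfl | hzu
  · simpa using hz.trans huv
  rcases eq_or_ne z v with rfl | hzv
  · simpa using hz.trans huv.symm
  rwa [swap_apply_of_ne_of_ne hzu hzv]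

lemma sameCycle_mul_swap_or_of_sameCycle (h : σ.SameCycle x u) :
    (σ * swap u v).SameCycle x u ∨ (σ * swap u v).SameCycle x v := by
  by_contra! hne
  refine hne.1 (sameCycle_of_forall_sameCycle_apply h fun z _ hz => ?_)
  have hzu : z ≠ u := fun hzu => hne.1 (hzu ▸ hz)
  have hzv : z ≠ v := fun hzv => hne.2 (hzv ▸ hz)
  simpa [swap_apply_of_ne_of_ne hzu hzv] using sameCycle_apply_right.2 hz

lemma isCycleOn_mul_swap_union {s t : Set X} (hs : σ.IsCycleOn s) (ht : σ.IsCycleOn t)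
    (hst : Disjoint s t) (hu : u ∈ s) (hv : v ∈ t) : (σ * swap u v).IsCycleOn (s ∪ t) := by
  have huv : (σ * swap u v).SameCycle u v :=
    sameCycle_mul_swap_of_not_sameCycle fun h =>
      Set.disjoint_left.1 hst ((mem_iff_mem_of_isCycleOn_of_sameCycle hs h).1 hu) hv
  have hu' : ∀ x ∈ s ∪ t, (σ * swap u v).SameCycle x u := by
    rintro x (hx | hx)
    · exact sameCycle_mul_swap_of_sameCycle huv (hs.2 hx hu)
    · exact (sameCycle_mul_swap_of_sameCycle huv (ht.2 hx hv)).trans huv.symm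
  refine isCycleOn_of_mapsTo_of_sameCycle (fun x hx => ?_) fun x hx y hy =>
    (hu' x hx).trans (hu' y hy).symm
  exact (hs.1.mapsTo.union_union ht.1.mapsTo)
    ((bijOn_swap (s := s ∪ t) (Or.inl hu) (Or.inr hv)).mapsTo hx)

end MulSwap

/-- `κ` permutes `S` cyclically and fixes every other point. Unlike in `Equiv.Perm.IsCycle`, the set
`S` may be a singleton: the identity is a `1`-cycle at each point. -/
structure IsMarkedCycle (κ : Perm X) (S : Finset X) : Prop where
  isCycleOn : κ.IsCycleOn S
  apply_of_notMem : ∀ x ∉ S, κ x = x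

namespace IsMarkedCycle

variable {κ : Perm X} {S : Finset X}

lemma one_singleton (x : X) : IsMarkedCycle 1 ({x} : Finset X) :=
  ⟨by simp, fun _ _ => rfl⟩

lemma inv (h : IsMarkedCycle κ S) : IsMarkedCycle κ⁻¹ S :=
  ⟨h.isCycleOn.inv, fun x hx => by rw [inv_eq_iff_eq, h.apply_of_notMem x hx]⟩

lemma of_sameCycle [Finite X] {ν : Perm X} {u : X} (h : IsMarkedCycle κ S)
    (hfix : ∀ x ∉ S, ν x = κ x) (hu : ∀ x ∈ S, ν.SameCycle x u) : IsMarkedCycle ν S := by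
  have hν : ∀ x ∉ S, ν x = x := fun x hx => (hfix x hx).trans (h.apply_of_notMem x hx)
  refine ⟨isCycleOn_of_mapsTo_of_sameCycle (fun x hx => ?_) fun x hx y hy =>
    (hu x hx).trans (hu y hy).symm, hν⟩
  by_contra hνx
  have hfixed : ν x = x := ν.injective (hν _ hνx)
  exact hνx (hfixed.symm ▸ hx)

variable [DecidableEq X] {u v w : X}

lemma sign_eq [Fintype X] (h : IsMarkedCycle κ S) (hS : (S : Set X).Nontrivial) :
    sign κ = -(-1) ^ S.card := by
  have hcycle : κ.IsCycle := isCycle_iff_exists_isCycleOn.2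
    ⟨S, hS, h.isCycleOn, fun x hx => by_contra fun hxS => hx (h.apply_of_notMem x hxS)⟩
  have hsupport : κ.support = S := by
    ext x
    exact ⟨fun hx => by_contra fun hxS => (mem_support.1 hx) (h.apply_of_notMem x hxS),
      fun hx => mem_support.2 (h.isCycleOn.apply_ne hS hx)⟩
  rw [hcycle.sign, hsupport]

variable [Finite X]

lemma mul_swap_insert (h : IsMarkedCycle κ S) (hv : v ∈ S) (hw : w ∉ S) :
    IsMarkedCycle (κ * swap v w) (insert w S) := by
  constructor
  · have hw' : κ.IsCycleOn ({w} : Set X) := isCycleOn_singleton.2 (h.apply_of_notMem w hw)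
    rw [Finset.coe_insert, Set.insert_eq, Set.union_comm]
    exact isCycleOn_mul_swap_union h.isCycleOn hw' (by simpa using hw) hv rfl
  · intro x hx
    obtain ⟨hxw, hxS⟩ : x ≠ w ∧ x ∉ S := by simpa using hx
    have hxv : x ≠ v := fun hxv => hxS (hxv ▸ hv)
    rw [mul_apply, swap_apply_of_ne_of_ne hxv hxw, h.apply_of_notMem x hxS]

lemma not_sameCycle_mul_swap (h : IsMarkedCycle κ S) (hu : u ∈ S) (hv : v ∈ S) (huv : u ≠ v) :
    ¬(κ * swap u v).SameCycle u v := by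
  intro hsame
  have := Fintype.ofFinite X
  have hS : (S : Set X).Nontrivial := ⟨u, hu, v, hv, huv⟩
  have hν : IsMarkedCycle (κ * swap u v) S := h.of_sameCycle (u := u)
    (fun x hx => by rw [mul_apply, swap_apply_of_notMem hu hv hx])
    fun x hx => sameCycle_mul_swap_of_sameCycle hsame (h.isCycleOn.2 hx hu)
  have hsign : sign (κ * swap u v) = sign κ := (hν.sign_eq hS).trans (h.sign_eq hS).symm
  rw [Perm.sign_mul, sign_swap huv, mul_neg_one] at hsign
  exact units_ne_neg_self _ hsign.symm

/-- Multiplying by `swap u v` splits the cycle in two, and multiplying by a transposition of points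
of the two halves joins them again. -/
lemma mul_swap_mul_swap_of_sameCycle (h : IsMarkedCycle κ S) (hu : u ∈ S) (hv : v ∈ S) (hw : w ∈ S)
    (huv : u ≠ v) (hwu : (κ * swap u v).SameCycle w u) :
    IsMarkedCycle (κ * swap u v * swap v w) S := by
  have hvw : (κ * swap u v * swap v w).SameCycle v w :=
    sameCycle_mul_swap_of_not_sameCycle fun hvw =>
      h.not_sameCycle_mul_swap hu hv huv (hvw.trans hwu).symm
  refine h.of_sameCycle (u := v) (fun x hx => ?_) fun x hx => ?_
  · simp only [mul_apply, swap_apply_of_notMem hv hw hx, swap_apply_of_notMem hu hv hx]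
  · rcases sameCycle_mul_swap_or_of_sameCycle (v := v) (h.isCycleOn.2 hx hu) with hxu | hxv
    · exact (sameCycle_mul_swap_of_sameCycle hvw (hxu.trans hwu.symm)).trans hvw.symm
    · exact sameCycle_mul_swap_of_sameCycle hvw hxv

lemma mul_swap_mul_swap (h : IsMarkedCycle κ S) (hu : u ∈ S) (hv : v ∈ S) (hw : w ∈ S)
    (huv : u ≠ v) :
    IsMarkedCycle (κ * swap u v * swap v w) S ∨ IsMarkedCycle (κ * swap u v * swap u w) S := by
  rcases sameCycle_mul_swap_or_of_sameCycle (v := v) (h.isCycleOn.2 hw hu) with hwu | hwv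
  · exact Or.inl (h.mul_swap_mul_swap_of_sameCycle hu hv hw huv hwu)
  · rw [swap_comm u v] at hwv ⊢
    exact Or.inr (h.mul_swap_mul_swap_of_sameCycle hv hu hw huv.symm hwv)

end IsMarkedCycle

end MarkedCycles

section CycleFamilies

open Equiv Equiv.Perm

variable {X Y : Type*}

lemma eq_of_isCycleOn_of_mem {σ : Perm X} {s t : Finset X} {x : X} (hs : σ.IsCycleOn s)
    (ht : σ.IsCycleOn t) (hxs : x ∈ s) (hxt : x ∈ t) : s = t := by
  ext y
  exact ⟨fun hy => (mem_iff_mem_of_isCycleOn_of_sameCycle ht (hs.2 hxs hy)).1 hxt,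
    fun hy => (mem_iff_mem_of_isCycleOn_of_sameCycle hs (ht.2 hxt hy)).1 hxs⟩

lemma sameCycle_of_semiconj [Finite X] {σ : Perm X} {τ : Perm Y} {f : X → Y}
    (hf : Function.Semiconj f σ τ) {x y : X} (h : σ.SameCycle x y) : τ.SameCycle (f x) (f y) := by
  obtain ⟨n, rfl⟩ := h.exists_nat_pow_eq
  refine ⟨n, ?_⟩
  rw [zpow_natCast, ← iterate_eq_pow, ← iterate_eq_pow]
  exact (hf.iterate_right n x).symm

lemma isCycleOn_map_of_semiconj [Finite Y] {σ : Perm X} {τ : Perm Y} {f : X ↪ Y}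
    (hf : Function.Semiconj f σ τ) {s : Finset X} (hs : σ.IsCycleOn s) :
    τ.IsCycleOn (s.map f : Finset Y) := by
  have : Finite X := Finite.of_injective f f.injective
  rw [Finset.coe_map]
  refine isCycleOn_of_mapsTo_of_sameCycle ?_ ?_
  · rintro _ ⟨x, hx, rfl⟩
    exact ⟨σ x, hs.apply_mem_iff.2 hx, hf x⟩
  · rintro _ ⟨x, hx, rfl⟩ _ ⟨y, hy, rfl⟩
    exact sameCycle_of_semiconj hf (hs.2 hx hy)

lemma exists_eq_cons_of_map_eq_cons {f : X → Y} {M : Multiset X} {y : Y} {N : Multiset Y}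
    (h : M.map f = y ::ₘ N) : ∃ x M', M = x ::ₘ M' ∧ f x = y ∧ M'.map f = N := by
  classical
  obtain ⟨x, hx, hxy, hN⟩ := (Multiset.map_eq_cons _ _ _ _).2 h
  exact ⟨x, M.erase x, (Multiset.cons_erase hx).symm, hxy, hN⟩

/-- `M` is the family of all cycles of `σ`, fixed points included, each recorded as the set of its
points. A multiset is used so that single cycles can be exhibited with `::ₘ`. -/
structure IsCycleFamily [Fintype X] (σ : Perm X) (M : Multiset (Finset X)) : Prop where
  bind_val : M.bind Finset.val = (Finset.univ : Finset X).val
  nonempty : ∀ s ∈ M, s.Nonempty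
  isCycleOn : ∀ s ∈ M, σ.IsCycleOn s

lemma isCycleFamily_singleton_univ [Fintype X] [Nonempty X] {σ : Perm X}
    (h : σ.IsCycleOn Set.univ) : IsCycleFamily σ {Finset.univ} :=
  ⟨by simp, by simp, by simpa using h⟩

namespace IsCycleFamily

variable [Fintype X] {σ : Perm X} {M : Multiset (Finset X)}

lemma exists_mem (h : IsCycleFamily σ M) (x : X) : ∃ s ∈ M, x ∈ s := by
  have hx : x ∈ M.bind Finset.val := h.bind_val ▸ Finset.mem_univ x
  simpa using hx

lemma sum_map_card (h : IsCycleFamily σ M) : (M.map Finset.card).sum = Fintype.card X := by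
  have hcard := congrArg Multiset.card h.bind_val
  rwa [Multiset.card_bind] at hcard

lemma disjoint {s t : Finset X} (h : IsCycleFamily σ (s ::ₘ M)) (ht : t ∈ M) : Disjoint s t := by
  have hnodup := (Finset.univ : Finset X).nodup
  rw [← h.bind_val, Multiset.cons_bind, Multiset.nodup_add] at hnodup
  refine Finset.disjoint_left.2 fun x hxs hxt => ?_
  exact Multiset.disjoint_left.1 hnodup.2.2 hxs (Multiset.mem_bind.2 ⟨t, ht, hxt⟩)

lemma nodup (h : IsCycleFamily σ M) : M.Nodup := by
  refine Multiset.nodup_iff_ne_cons_cons.2 fun s N hM => ?_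
  subst hM
  obtain ⟨x, hx⟩ := h.nonempty s (Multiset.mem_cons_self s _)
  exact Finset.disjoint_left.1 (h.disjoint (Multiset.mem_cons_self s N)) hx hx

lemma exists_mem_of_forall_sameCycle {S s : Finset X} (h : IsCycleFamily σ M) (hs : s ∈ M)
    (hS : ∀ x, ∃ y ∈ S, σ.SameCycle x y) : ∃ y ∈ S, y ∈ s := by
  obtain ⟨x, hx⟩ := h.nonempty s hs
  obtain ⟨y, hy, hxy⟩ := hS x
  exact ⟨y, hy, (mem_iff_mem_of_isCycleOn_of_sameCycle (h.isCycleOn s hs) hxy).1 hx⟩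

lemma sumCongr [Fintype Y] {τ : Perm Y} {N : Multiset (Finset Y)}
    (h : IsCycleFamily σ M) (h' : IsCycleFamily τ N) :
    IsCycleFamily (Perm.sumCongr σ τ)
      (M.map (Finset.map .inl) + N.map (Finset.map .inr)) := by
  refine ⟨?_, ?_, ?_⟩
  · rw [Multiset.add_bind, Multiset.bind_map, Multiset.bind_map]
    simp only [Finset.map_val]
    rw [← Multiset.map_bind, ← Multiset.map_bind, h.bind_val, h'.bind_val]
    rfl
  · simp only [Multiset.mem_add, Multiset.mem_map]
    rintro _ (⟨s, hs, rfl⟩ | ⟨s, hs, rfl⟩)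
    · exact (h.nonempty s hs).map
    · exact (h'.nonempty s hs).map
  · simp only [Multiset.mem_add, Multiset.mem_map]
    rintro _ (⟨s, hs, rfl⟩ | ⟨s, hs, rfl⟩)
    · exact isCycleOn_map_of_semiconj (fun x => rfl) (h.isCycleOn s hs)
    · exact isCycleOn_map_of_semiconj (fun x => rfl) (h'.isCycleOn s hs)

lemma permCongr [Fintype Y] (h : IsCycleFamily σ M) (e : X ≃ Y) :
    IsCycleFamily (e.permCongr σ) (M.map (Finset.map e.toEmbedding)) := by
  refine ⟨?_, ?_, ?_⟩
  · rw [Multiset.bind_map]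
    simp only [Finset.map_val]
    rw [← Multiset.map_bind, h.bind_val, ← Finset.map_val, Finset.map_univ_equiv]
  · simp only [Multiset.mem_map]
    rintro _ ⟨s, hs, rfl⟩
    exact (h.nonempty s hs).map
  · simp only [Multiset.mem_map]
    rintro _ ⟨s, hs, rfl⟩
    exact isCycleOn_map_of_semiconj (fun x => by simp) (h.isCycleOn s hs)

variable [DecidableEq X]

lemma filter_two_le_card (h : IsCycleFamily σ M) :
    M.filter (2 ≤ ·.card) = σ.cycleFactorsFinset.val.map support := by
  have hinj : Set.InjOn support (σ.cycleFactorsFinset : Set (Perm X)) := by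
    intro c hc c' hc' hcc'
    obtain ⟨x, hx⟩ := (mem_cycleFactorsFinset_iff.1 hc).1.nonempty_support
    rw [cycle_is_cycleOf hx hc, cycle_is_cycleOf (hcc' ▸ hx) hc']
  refine (Multiset.Nodup.ext (h.nodup.filter _) (σ.cycleFactorsFinset.nodup.map_on hinj)).2
    fun s => ?_
  simp only [Multiset.mem_filter, Multiset.mem_map, Finset.mem_val]
  constructor
  · rintro ⟨hs, hcard⟩
    obtain ⟨x, hx⟩ := h.nonempty s hs
    have hxσ : x ∈ σ.support := mem_support.2
      ((h.isCycleOn s hs).apply_ne (Finset.one_lt_card_iff_nontrivial.1 hcard) hx)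
    exact ⟨σ.cycleOf x, cycleOf_mem_cycleFactorsFinset_iff.2 hxσ,
      eq_of_isCycleOn_of_mem (isCycleOn_support_cycleOf σ x) (h.isCycleOn s hs)
        (mem_support_cycleOf_iff.2 ⟨SameCycle.refl σ x, hxσ⟩) hx⟩
  · rintro ⟨c, hc, rfl⟩
    obtain ⟨x, hx⟩ := (mem_cycleFactorsFinset_iff.1 hc).1.nonempty_support
    obtain ⟨s, hs, hxs⟩ := h.exists_mem x
    have hsc : s = c.support := eq_of_isCycleOn_of_mem (h.isCycleOn s hs)
      (isCycleOn_support_of_mem_cycleFactorsFinset hc) hxs hx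
    exact ⟨hsc ▸ hs, (mem_cycleFactorsFinset_iff.1 hc).1.two_le_card_support⟩

lemma parts_partition (h : IsCycleFamily σ M) : σ.partition.parts = M.map Finset.card := by
  have hbig : (M.map Finset.card).filter (2 ≤ ·) = σ.cycleType := by
    rw [Multiset.filter_map, cycleType_def]
    simp only [Function.comp_def, h.filter_two_le_card, Multiset.map_map]
  have hsmall : (M.map Finset.card).filter (¬2 ≤ ·) =
      Multiset.replicate ((M.map Finset.card).filter (¬2 ≤ ·)).card 1 := by
    refine Multiset.eq_replicate_card.2 fun k hk => ?_
    obtain ⟨hkM, hk2⟩ := Multiset.mem_filter.1 hk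
    obtain ⟨s, hs, rfl⟩ := Multiset.mem_map.1 hkM
    have := (h.nonempty s hs).card_pos
    omega
  have hsplit := Multiset.filter_add_not (2 ≤ ·) (M.map Finset.card)
  rw [hbig, hsmall] at hsplit
  have hsum := congrArg Multiset.sum hsplit
  rw [h.sum_map_card, Multiset.sum_add, sum_cycleType, Multiset.sum_replicate, smul_eq_mul,
    mul_one] at hsum
  rw [Perm.parts_partition, ← hsplit, ← hsum, Nat.add_sub_cancel_left]

lemma mul_swap {s t : Finset X} {u v : X} (h : IsCycleFamily σ (s ::ₘ t ::ₘ M)) (hu : u ∈ s)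
    (hv : v ∈ t) : IsCycleFamily (σ * swap u v) ((s ∪ t) ::ₘ M) := by
  have hst : Disjoint s t := h.disjoint (Multiset.mem_cons_self t M)
  have hs := h.isCycleOn s (by simp)
  have ht := h.isCycleOn t (by simp)
  refine ⟨?_, ?_, ?_⟩
  · rw [← h.bind_val, Multiset.cons_bind, Multiset.cons_bind, Multiset.cons_bind, ← add_assoc,
      Finset.union_val, Multiset.add_eq_union_iff_disjoint.2 (Finset.disjoint_val.2 hst)]
  · intro r hr
    rcases Multiset.mem_cons.1 hr with rfl | hr
    · exact ⟨u, Finset.mem_union_left t hu⟩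
    · exact h.nonempty r (by simp [hr])
  · intro r hr
    rcases Multiset.mem_cons.1 hr with rfl | hr
    · rw [Finset.coe_union]
      exact isCycleOn_mul_swap_union hs ht (by exact_mod_cast hst) hu hv
    · have hsr : Disjoint s r := h.disjoint (by simp [hr])
      have htr : Disjoint t r :=
        (show IsCycleFamily σ (t ::ₘ s ::ₘ M) from Multiset.cons_swap s t M ▸ h).disjoint
          (by simp [hr])
      refine isCycleOn_congr (h.isCycleOn r (by simp [hr])) fun x hx => ?_
      rw [mul_apply, swap_apply_of_ne_of_ne]
      · rintro rfl
        exact Finset.disjoint_left.1 hsr hu hx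
      · rintro rfl
        exact Finset.disjoint_left.1 htr hv hx

lemma parts_partition_mul_swap {s t : Finset X} {u v : X} (h : IsCycleFamily σ (s ::ₘ t ::ₘ M))
    (hu : u ∈ s) (hv : v ∈ t) :
    (σ * swap u v).partition.parts = (s.card + t.card) ::ₘ M.map Finset.card := by
  have hst : Disjoint s t := h.disjoint (Multiset.mem_cons_self t M)
  rw [(h.mul_swap hu hv).parts_partition, Multiset.map_cons, Finset.card_union_of_disjoint hst]

end IsCycleFamily

lemma exists_isCycleFamily [Fintype X] (σ : Perm X) : ∃ M, IsCycleFamily σ M := by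
  classical
  let r : Setoid X := SameCycle.setoid σ
  let P := Finpartition.ofSetoid r
  refine ⟨P.parts.val, ?_, fun s hs => P.nonempty_of_mem_parts hs, fun s hs => ?_⟩
  · have hunion := (Finset.disjiUnion_eq_biUnion P.parts id P.disjoint).trans P.biUnion_parts
    exact congrArg Finset.val hunion
  · have hsame : ∀ x ∈ s, ∀ y, y ∈ s ↔ σ.SameCycle x y := fun x hx y => by
      rw [← P.part_eq_of_mem hs hx]
      exact Finpartition.mem_part_ofSetoid_iff_rel
    refine isCycleOn_of_mapsTo_of_sameCycle (fun x hx => ?_) fun x hx y hy => (hsame x hx y).1 hy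
    exact (hsame x hx _).2 (sameCycle_apply_right.2 (SameCycle.refl σ x))

variable [Fintype X] [DecidableEq X] [Fintype Y] [DecidableEq Y]

lemma exists_isCycleFamily_cons {σ : Perm X} {k : ℕ} {a : Multiset ℕ}
    (h : σ.partition.parts = k ::ₘ a) :
    ∃ s M, IsCycleFamily σ (s ::ₘ M) ∧ s.card = k ∧ M.map Finset.card = a := by
  obtain ⟨M, hM⟩ := exists_isCycleFamily σ
  rw [hM.parts_partition] at h
  obtain ⟨s, N, rfl, hk, ha⟩ := exists_eq_cons_of_map_eq_cons h
  exact ⟨s, N, hM, hk, ha⟩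

lemma parts_partition_sumCongr (σ : Perm X) (τ : Perm Y) :
    (Perm.sumCongr σ τ).partition.parts = σ.partition.parts + τ.partition.parts := by
  obtain ⟨M, hM⟩ := exists_isCycleFamily σ
  obtain ⟨N, hN⟩ := exists_isCycleFamily τ
  simp [(hM.sumCongr hN).parts_partition, hM.parts_partition, hN.parts_partition]

lemma parts_partition_permCongr (e : X ≃ Y) (σ : Perm X) :
    (e.permCongr σ).partition.parts = σ.partition.parts := by
  obtain ⟨M, hM⟩ := exists_isCycleFamily σ
  simp [(hM.permCongr e).parts_partition, hM.parts_partition]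

lemma parts_partition_inv (σ : Perm X) : σ⁻¹.partition.parts = σ.partition.parts := by
  simp [parts_partition]

lemma parts_partition_of_isConj {σ τ : Perm X} (h : IsConj σ τ) :
    τ.partition.parts = σ.partition.parts := by
  rw [partition_eq_of_isConj.1 h]

lemma exists_permCongr_eq {σ : Perm X} {τ : Perm Y}
    (h : σ.partition.parts = τ.partition.parts) : ∃ e : X ≃ Y, e.permCongr σ = τ := by
  have hcard : Fintype.card X = Fintype.card Y := by
    rw [← σ.partition.parts_sum, h, τ.partition.parts_sum]
  obtain ⟨e⟩ := Fintype.card_eq.1 hcard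
  have hconj : IsConj (e.permCongr σ) τ :=
    partition_eq_of_isConj.2 (Nat.Partition.ext ((parts_partition_permCongr e σ).trans h))
  obtain ⟨κ, hκ⟩ := isConj_iff.1 hconj
  refine ⟨e.trans κ, ?_⟩
  rw [← hκ]
  ext y
  simp

lemma parts_partition_of_isCycleOn_univ [Nonempty X] {σ : Perm X} (h : σ.IsCycleOn Set.univ) :
    σ.partition.parts = {Fintype.card X} := by
  simp [(isCycleFamily_singleton_univ h).parts_partition]

lemma exists_isCycleOn_univ (n : ℕ) : ∃ c : Perm (Fin n), c.IsCycleOn Set.univ := by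
  obtain ⟨c, hc, -⟩ := (Finset.univ : Finset (Fin n)).exists_cycleOn
  exact ⟨c, by simpa using hc⟩

lemma exists_perm_parts_partition_eq {a : Multiset ℕ} (ha : ∀ x ∈ a, 0 < x) :
    ∃ (X : Type) (_ : Fintype X) (_ : DecidableEq X) (σ : Perm X), σ.partition.parts = a := by
  induction a using Multiset.induction with
  | empty => exact ⟨Empty, inferInstance, inferInstance, 1, by simp [parts_partition]⟩
  | cons k a ih =>
    obtain ⟨X, _, _, σ, hσ⟩ := ih fun x hx => ha x (Multiset.mem_cons_of_mem hx)
    have : NeZero k := ⟨(ha k (Multiset.mem_cons_self k a)).ne'⟩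
    obtain ⟨c, hc⟩ := exists_isCycleOn_univ k
    refine ⟨Fin k ⊕ X, inferInstance, inferInstance, Perm.sumCongr c σ, ?_⟩
    rw [parts_partition_sumCongr, parts_partition_of_isCycleOn_univ hc, hσ, Fintype.card_fin,
      Multiset.singleton_add]

end CycleFamilies

section CycleSteps

open Equiv Equiv.Perm

lemma IsMarkedCycle.sumCongr_one {X : Type*} {κ : Perm X} {S : Finset X} (h : IsMarkedCycle κ S)
    [Finite X] (Y : Type*) [Finite Y] :
    IsMarkedCycle (Perm.sumCongr κ (1 : Perm Y)) (S.map .inl) := by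
  refine ⟨isCycleOn_map_of_semiconj (fun x => rfl) h.isCycleOn, ?_⟩
  rintro (x | y) hx
  · simpa using h.apply_of_notMem x (by simpa using hx)
  · rfl

lemma IsMarkedCycle.exists_sameCycle_mul {X : Type*} [Finite X] {σ κ : Perm X} {S : Finset X}
    (hκ : IsMarkedCycle κ S) (hS : ∀ x, ∃ y ∈ S, σ.SameCycle x y) (x : X) :
    ∃ y ∈ S, (σ * κ).SameCycle x y := by
  obtain ⟨y, hy, hxy⟩ := hS x
  by_contra! hne
  refine hne y hy (sameCycle_of_forall_sameCycle_apply hxy fun z _ hz => ?_)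
  have hzκ : κ z = z := hκ.apply_of_notMem z fun hzS => hne z hzS hz
  have hzσ : σ z = (σ * κ) z := by rw [mul_apply, hzκ]
  rw [hzσ]
  exact sameCycle_apply_right.2 hz

/-- Some permutation with cycle lengths `a` becomes one with cycle lengths `b` after multiplication
by an `(m + 1)`-cycle that meets every cycle. The genus `g` of such a step is given by
`a.card + b.card + 2 * g = m + 2`. -/
def CycleStep (m : ℕ) (a b : Multiset ℕ) : Prop :=
  ∃ (X : Type) (_ : Fintype X) (_ : DecidableEq X) (σ κ : Perm X) (S : Finset X),
    S.card = m + 1 ∧ IsMarkedCycle κ S ∧ (∀ x, ∃ y ∈ S, σ.SameCycle x y) ∧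
      σ.partition.parts = a ∧ (σ * κ).partition.parts = b

namespace CycleStep

variable {m : ℕ} {a b : Multiset ℕ}

lemma symm (h : CycleStep m a b) : CycleStep m b a := by
  obtain ⟨X, _, _, σ, κ, S, hcard, hκ, hS, ha, hb⟩ := h
  exact ⟨X, _, _, σ * κ, κ⁻¹, S, hcard, hκ.inv, hκ.exists_sameCycle_mul hS, hb, by simpa using ha⟩

lemma singleton {c : ℕ} (hc : 0 < c) : CycleStep 0 {c} {c} := by
  have : NeZero c := ⟨hc.ne'⟩
  obtain ⟨σ, hσ⟩ := exists_isCycleOn_univ c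
  have hparts : σ.partition.parts = {c} := by
    rw [parts_partition_of_isCycleOn_univ hσ, Fintype.card_fin]
  exact ⟨Fin c, _, _, σ, 1, {0}, rfl, IsMarkedCycle.one_singleton 0,
    fun x => ⟨0, by simp, hσ.2 trivial trivial⟩, hparts, by rwa [mul_one]⟩

lemma cons {x y : ℕ} (h : CycleStep m a (y ::ₘ b)) (hx : 0 < x) :
    CycleStep (m + 1) (x ::ₘ a) ((x + y) ::ₘ b) := by
  obtain ⟨X, _, _, σ, κ, S, hcard, hκ, hS, ha, hb⟩ := h
  have : NeZero x := ⟨hx.ne'⟩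
  obtain ⟨c, hc⟩ := exists_isCycleOn_univ x
  obtain ⟨s, M, hM, hs, hMb⟩ := exists_isCycleFamily_cons hb
  obtain ⟨v, hvS, hvs⟩ := hM.exists_mem_of_forall_sameCycle (Multiset.mem_cons_self s M)
    (hκ.exists_sameCycle_mul hS)
  have hfamily := hM.sumCongr (isCycleFamily_singleton_univ hc)
  rw [add_comm, Multiset.map_singleton, Multiset.singleton_add, Multiset.map_cons] at hfamily
  have h0 : (Sum.inr 0 : X ⊕ Fin x) ∉ S.map .inl := by simp
  refine ⟨X ⊕ Fin x, inferInstance, inferInstance, Perm.sumCongr σ c,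
    Perm.sumCongr κ 1 * swap (Sum.inr 0) (Sum.inl v), insert (Sum.inr 0) (S.map .inl),
    ?_, ?_, ?_, ?_, ?_⟩
  · rw [Finset.card_insert_of_notMem h0, Finset.card_map, hcard]
  · rw [swap_comm]
    exact (hκ.sumCongr_one (Fin x)).mul_swap_insert (by simpa using hvS) h0
  · rintro (z | i)
    · obtain ⟨w, hw, hzw⟩ := hS z
      exact ⟨Sum.inl w, by simpa using hw, sameCycle_of_semiconj (f := Sum.inl) (fun _ => rfl) hzw⟩
    · exact ⟨Sum.inr 0, by simp, sameCycle_of_semiconj (f := Sum.inr) (fun _ => rfl)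
        (hc.2 (Set.mem_univ i) (Set.mem_univ 0))⟩
  · rw [parts_partition_sumCongr, parts_partition_of_isCycleOn_univ hc, ha, Fintype.card_fin,
      add_comm, Multiset.singleton_add]
  · rw [← mul_assoc, Perm.sumCongr_mul, mul_one,
      hfamily.parts_partition_mul_swap (by simp) (by simpa using hvs)]
    simp [hs, ← hMb]

/-- Three cycles of the product meeting the cycle `κ` become one if `κ` is cut at points of two
of them and rejoined through the third. -/
lemma glue {x y z : ℕ} (h : CycleStep m a (x ::ₘ y ::ₘ z ::ₘ b)) :
    CycleStep m a ((x + y + z) ::ₘ b) := by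
  obtain ⟨X, _, _, σ, κ, S, hcard, hκ, hS, ha, hb⟩ := h
  obtain ⟨s, M, hM, rfl, hMb⟩ := exists_isCycleFamily_cons hb
  obtain ⟨t, N, rfl, rfl, hNb⟩ := exists_eq_cons_of_map_eq_cons hMb
  obtain ⟨r, M, rfl, rfl, rfl⟩ := exists_eq_cons_of_map_eq_cons hNb
  have hS' := hκ.exists_sameCycle_mul hS
  obtain ⟨u, huS, hu⟩ := hM.exists_mem_of_forall_sameCycle (s := s) (by simp) hS'
  obtain ⟨v, hvS, hv⟩ := hM.exists_mem_of_forall_sameCycle (s := t) (by simp) hS'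
  obtain ⟨w, hwS, hw⟩ := hM.exists_mem_of_forall_sameCycle (s := r) (by simp) hS'
  have hst : Disjoint s t := hM.disjoint (by simp)
  have huv : u ≠ v := fun huv => Finset.disjoint_left.1 hst hu (huv ▸ hv)
  have hparts : ∀ p ∈ s ∪ t, (σ * (κ * swap u v * swap p w)).partition.parts =
      (s.card + t.card + r.card) ::ₘ M.map Finset.card := fun p hp => by
    rw [← mul_assoc, ← mul_assoc, (hM.mul_swap hu hv).parts_partition_mul_swap hp hw,
      Finset.card_union_of_disjoint hst]
  rcases hκ.mul_swap_mul_swap huS hvS hwS huv with hκ' | hκ'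
  · exact ⟨X, _, _, σ, _, S, hcard, hκ', hS, ha, hparts v (Finset.mem_union_right s hv)⟩
  · exact ⟨X, _, _, σ, _, S, hcard, hκ', hS, ha, hparts u (Finset.mem_union_left t hu)⟩

end CycleStep

end CycleSteps

section Partitions

/-- `a` is the multiset of parts of a partition of `d`; unlike `Nat.Partition d`, this keeps `a` a
plain multiset, whose parts can be changed one at a time. -/
structure IsPartitionOf (a : Multiset ℕ) (d : ℕ) : Prop where
  pos : ∀ x ∈ a, 0 < x
  sum_eq : a.sum = d

namespace IsPartitionOf

variable {a b : Multiset ℕ} {d e x : ℕ}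

lemma singleton (hd : 0 < d) : IsPartitionOf {d} d := ⟨by simpa using hd, by simp⟩

lemma add (ha : IsPartitionOf a d) (hb : IsPartitionOf b e) : IsPartitionOf (a + b) (d + e) := by
  refine ⟨fun x hx => ?_, by rw [Multiset.sum_add, ha.sum_eq, hb.sum_eq]⟩
  exact (Multiset.mem_add.1 hx).elim (ha.pos x) (hb.pos x)

lemma cons (ha : IsPartitionOf a e) (hx : 0 < x) (hd : x + e = d) : IsPartitionOf (x ::ₘ a) d :=
  hd ▸ (singleton hx).add ha

lemma exists_eq_cons (ha : IsPartitionOf a d) (hx : x ∈ a) :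
    ∃ a' e, a = x ::ₘ a' ∧ d = x + e ∧ 0 < x ∧ IsPartitionOf a' e := by
  obtain ⟨a', rfl⟩ := Multiset.exists_cons_of_mem hx
  exact ⟨a', a'.sum, rfl, by rw [← ha.sum_eq, Multiset.sum_cons], ha.pos x hx,
    fun y hy => ha.pos y (Multiset.mem_cons_of_mem hy), rfl⟩

lemma card_mul_le (ha : IsPartitionOf a d) {c : ℕ} (hc : ∀ x ∈ a, c ≤ x) : a.card * c ≤ d := by
  simpa [ha.sum_eq] using Multiset.card_nsmul_le_sum hc

lemma le_card_mul (ha : IsPartitionOf a d) {c : ℕ} (hc : ∀ x ∈ a, x ≤ c) : d ≤ a.card * c := by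
  simpa [ha.sum_eq] using Multiset.sum_le_card_nsmul a c hc

lemma card_le (ha : IsPartitionOf a d) : a.card ≤ d := by
  simpa using ha.card_mul_le (c := 1) ha.pos

lemma exists_mem (ha : IsPartitionOf a d) (hd : 0 < d) : ∃ x, x ∈ a := by
  refine Multiset.exists_mem_of_ne_zero ?_
  rintro rfl
  simpa [hd.ne] using ha.sum_eq

lemma exists_lt_mem (ha : IsPartitionOf a d) {c : ℕ} (hd : a.card * c < d) : ∃ x ∈ a, c < x := by
  by_contra! hle
  exact hd.not_ge (ha.le_card_mul hle)

end IsPartitionOf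

end Partitions

section SingleStep

namespace CycleStep

variable {m d : ℕ} {a b : Multiset ℕ}

/-- A part `1` of `a` can be attached to any part of `b` that is not `1`. -/
lemma of_genus_zero (ha : IsPartitionOf a (m + 1)) (hb : IsPartitionOf b (m + 1))
    (hcard : a.card + b.card = m + 2) : CycleStep m a b := by
  induction m generalizing a b with
  | zero =>
    have hone : ∀ {c : Multiset ℕ}, IsPartitionOf c 1 → c.card = 1 → c = {1} := fun hc h => by
      obtain ⟨x, rfl⟩ := Multiset.card_eq_one.1 h
      simpa using hc.sum_eq
    have hale := ha.card_le
    have hble := hb.card_le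
    rw [hone ha (by omega), hone hb (by omega)]
    exact singleton one_pos
  | succ m ih =>
    wlog h1 : 1 ∈ a generalizing a b
    · refine (this hb ha (by omega) ?_).symm
      by_contra h1'
      have htwo : ∀ {c : Multiset ℕ}, IsPartitionOf c (m + 2) → 1 ∉ c → c.card * 2 ≤ m + 2 :=
        fun hc h => hc.card_mul_le fun x hx =>
          lt_of_le_of_ne (hc.pos x hx) (ne_of_mem_of_not_mem hx h).symm
      have := htwo ha h1
      have := htwo hb h1'
      omega
    obtain ⟨a, e, rfl, he, -, ha⟩ := ha.exists_eq_cons h1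
    rw [Multiset.card_cons] at hcard
    obtain ⟨x, hx⟩ := ha.exists_mem (by omega)
    have hapos := Multiset.card_pos_iff_exists_mem.2 ⟨x, hx⟩
    obtain ⟨y, hy, hy1⟩ := hb.exists_lt_mem (c := 1) (by omega)
    obtain ⟨b, f, rfl, hf, -, hb⟩ := hb.exists_eq_cons hy
    rw [Multiset.card_cons] at hcard
    have hstep := ih (a := a) (b := (y - 1) ::ₘ b) (by convert ha using 1; omega)
      (hb.cons (by omega) (by omega)) (by rw [Multiset.card_cons]; omega)
    simpa [show 1 + (y - 1) = y by omega] using hstep.cons one_pos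

/-- Gluing raises the genus. -/
lemma add_genus {g : ℕ} (hmd : m + 1 ≤ d)
    (h : ∀ a b, IsPartitionOf a d → IsPartitionOf b d → a.card + b.card + 2 * g = m + 2 →
      CycleStep m a b)
    (k : ℕ) (ha : IsPartitionOf a d) (hb : IsPartitionOf b d)
    (hcard : a.card + b.card + 2 * (g + k) = m + 2) : CycleStep m a b := by
  induction k generalizing a b with
  | zero => exact h a b ha hb hcard
  | succ k ih =>
    wlog h3 : ∃ y ∈ b, 2 < y generalizing a b
    · refine (this hb ha (by omega) (ha.exists_lt_mem ?_)).symm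
      push Not at h3
      have := hb.le_card_mul h3
      omega
    obtain ⟨y, hy, hy2⟩ := h3
    obtain ⟨b, e, rfl, rfl, -, hb⟩ := hb.exists_eq_cons hy
    have hsplit : IsPartitionOf (1 ::ₘ 1 ::ₘ (y - 2) ::ₘ b) (y + e) :=
      ((hb.cons (by omega) rfl).cons one_pos rfl).cons one_pos (by omega)
    have hglue := (ih ha hsplit (by simp only [Multiset.card_cons] at hcard ⊢; omega)).glue
    rwa [show 1 + 1 + (y - 2) = y by omega] at hglue

lemma replicate_split {c : ℕ} (hc : 3 ≤ c) (k : ℕ) :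
    CycleStep (2 * (k + 1)) (Multiset.replicate (k + 1) c)
      (1 ::ₘ 1 ::ₘ (c - 2) ::ₘ Multiset.replicate k c) := by
  induction k with
  | zero =>
    have h := ((singleton (c := c - 2) (by omega)).cons (b := 0) one_pos).cons (b := 0) one_pos
    rw [show 1 + (1 + (c - 2)) = c by omega] at h
    exact h.symm
  | succ k ih =>
    have h := ((ih.cons (x := c - 1) (by omega)).symm.cons (x := 1) one_pos).symm
    rw [show c - 1 + 1 = c by omega, show 1 + (c - 1) = c by omega] at h
    rw [Multiset.cons_swap c 1, Multiset.cons_swap c (c - 2)] at h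
    exact h

lemma replicate_replicate {c : ℕ} (hc : 3 ≤ c) (k : ℕ) :
    CycleStep (2 * (k + 1)) (Multiset.replicate (k + 1) c) (Multiset.replicate (k + 1) c) := by
  have h := (replicate_split hc k).glue
  rwa [show 1 + 1 + (c - 2) = c by omega, ← Multiset.replicate_succ] at h

/-- A handle is created by lengthening one part on each side of a genus-zero step by the same
amount. -/
lemma of_mem_of_mem_of_lt {s x y : ℕ} (hs : 0 < s) (ha : IsPartitionOf a (m + s))
    (hb : IsPartitionOf b (m + s)) (hcard : a.card + b.card = m) (hx : x ∈ a) (hy : y ∈ b)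
    (hsx : s + 1 < x) (hsy : s + 1 < y) : CycleStep m a b := by
  obtain ⟨a, e, rfl, he, -, ha'⟩ := ha.exists_eq_cons hx
  obtain ⟨b, f, rfl, hf, -, hb'⟩ := hb.exists_eq_cons hy
  simp only [Multiset.card_cons] at hcard
  obtain ⟨n, rfl⟩ : ∃ n, m = n + 2 := ⟨m - 2, by omega⟩
  have hshort : CycleStep n ((x - (s + 1)) ::ₘ a) ((y - (s + 1)) ::ₘ b) :=
    of_genus_zero (ha'.cons (by omega) (by omega)) (hb'.cons (by omega) (by omega))
      (by simp only [Multiset.card_cons]; omega)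
  have hglue := ((hshort.symm.cons hs).cons one_pos).symm.glue
  rwa [show 1 + (s + (x - (s + 1))) = x by omega, show 1 + s + (y - (s + 1)) = y by omega] at hglue

end CycleStep

/-- If none of the alternatives holds, then all parts of `a` equal `s + 2` and all parts of `b` are
at least `s + 2`, which leaves too few parts. -/
lemma IsPartitionOf.exists_reducible_pair {a b : Multiset ℕ} {d s : ℕ} (ha : IsPartitionOf a d)
    (hb : IsPartitionOf b d) (hs : 0 < s) (hcard : a.card + b.card + (s + 1) = d)
    (hlt : ∃ x ∈ a, ∃ y ∈ b, x < y) :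
    (∃ x ∈ a, ∃ y ∈ b, x < y ∧ x ≤ s + 1) ∨ (∃ x ∈ a, ∃ y ∈ b, y < x ∧ y ≤ s + 1) ∨
      ∃ x ∈ a, ∃ y ∈ b, s + 2 < x ∧ s + 2 < y := by
  by_contra! ⟨hab, hba, hlarge⟩
  obtain ⟨x, hx, y, hy, hxy⟩ := hlt
  have hxs := hab x hx y hy hxy
  have ha_le : ∀ z ∈ a, z ≤ s + 2 := fun z hz => by
    by_contra! hsz
    have := hlarge z hz y hy hsz
    omega
  have ha_ge : ∀ z ∈ a, s + 2 ≤ z := fun z hz =>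
    hab z hz y hy ((ha_le z hz).trans_lt (by omega))
  have hb_ge : ∀ w ∈ b, s + 2 ≤ w := fun w hw => by
    by_contra! hws
    have := hba x hx w hw (by omega)
    omega
  have hda := (ha.card_mul_le ha_ge).antisymm (ha.le_card_mul ha_le)
  obtain ⟨b, e, rfl, rfl, -, hb⟩ := hb.exists_eq_cons hy
  have hdb := hb.card_mul_le fun w hw => hb_ge w (Multiset.mem_cons_of_mem hw)
  rw [Multiset.card_cons] at hcard
  have hlt : b.card + 1 < a.card := by
    by_contra! hle
    have := Nat.mul_le_mul_right (s + 2) hle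
    rw [add_mul] at this
    omega
  nlinarith

namespace CycleStep

variable {m d : ℕ} {a b : Multiset ℕ}

lemma of_genus_one_of_forall_eq (hmd : m + 1 < d) (ha : IsPartitionOf a d)
    (hb : IsPartitionOf b d) (hcard : a.card + b.card = m) (heq : ∀ x ∈ a, ∀ y ∈ b, x = y) :
    CycleStep m a b := by
  obtain ⟨x, hx⟩ := ha.exists_mem (by omega)
  obtain ⟨y, hy⟩ := hb.exists_mem (by omega)
  have hb' := Multiset.eq_replicate_card.2 fun z hz => (heq x hx z hz).symm
  have ha' := Multiset.eq_replicate_card.2 fun z hz => (heq z hz y hy).trans (heq x hx y hy).symm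
  have hda : a.card * x = d := by rw [← ha.sum_eq, ha', Multiset.sum_replicate]; simp
  have hdb : b.card * x = d := by rw [← hb.sum_eq, hb', Multiset.sum_replicate]; simp
  have hcc : a.card = b.card := Nat.eq_of_mul_eq_mul_right (ha.pos x hx) (hda.trans hdb.symm)
  have hx3 : 3 ≤ x := by
    by_contra! hx2
    have := Nat.mul_le_mul_left a.card (show x ≤ 2 by omega)
    omega
  obtain ⟨k, hk⟩ := Nat.exists_eq_succ_of_ne_zero (Multiset.card_pos_iff_exists_mem.2 ⟨x, hx⟩).ne'
  rw [ha', hb', ← hcc, hk, ← hcard, ← hcc, hk, ← two_mul]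
  exact replicate_replicate hx3 k

lemma of_genus_one (hmd : m + 1 ≤ d) (ha : IsPartitionOf a d)
    (hb : IsPartitionOf b d) (hcard : a.card + b.card = m) : CycleStep m a b := by
  induction m generalizing a b d with
  | zero =>
    obtain ⟨x, hx⟩ := ha.exists_mem (by omega)
    have := Multiset.card_pos_iff_exists_mem.2 ⟨x, hx⟩
    omega
  | succ m ih =>
    obtain rfl | hmd := hmd.eq_or_lt
    · exact add_genus (g := 0) le_rfl (fun _ _ ha hb h => of_genus_zero ha hb h) 1 ha hb
        (by omega)
    by_cases heq : ∀ x ∈ a, ∀ y ∈ b, x = y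
    · exact of_genus_one_of_forall_eq hmd ha hb hcard heq
    push Not at heq
    obtain ⟨s, rfl⟩ : ∃ s, d = m + 1 + (s + 1) := ⟨d - (m + 2), by omega⟩
    have hattach : ∀ {a b : Multiset ℕ}, IsPartitionOf a (m + 1 + (s + 1)) →
        IsPartitionOf b (m + 1 + (s + 1)) → a.card + b.card = m + 1 →
        ∀ x ∈ a, ∀ y ∈ b, x < y → x ≤ s + 1 → CycleStep (m + 1) a b := by
      intro a b ha hb hcard x hx y hy hxy hxs
      obtain ⟨a, e, rfl, he, hx0, ha⟩ := ha.exists_eq_cons hx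
      obtain ⟨b, f, rfl, hf, -, hb⟩ := hb.exists_eq_cons hy
      simp only [Multiset.card_cons] at hcard
      have h := ih (d := e) (by omega) ha (hb.cons (x := y - x) (by omega) (by omega))
        (by rw [Multiset.card_cons]; omega)
      simpa [Nat.add_sub_cancel' hxy.le] using h.cons hx0
    wlog hlt : ∃ x ∈ a, ∃ y ∈ b, x < y generalizing a b
    · obtain ⟨x, hx, y, hy, hne⟩ := heq
      push Not at hlt
      exact (this (by omega) ⟨y, hy, x, hx, hne.symm⟩ hb ha
        ⟨y, hy, x, hx, (hlt x hx y hy).lt_of_ne hne.symm⟩).symm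
    rcases ha.exists_reducible_pair hb (s := s) (by omega) (by omega) hlt with
      ⟨x, hx, y, hy, hxy, hxs⟩ | ⟨x, hx, y, hy, hyx, hys⟩ | ⟨x, hx, y, hy, hxs, hys⟩
    · exact hattach ha hb hcard x hx y hy hxy hxs
    · exact (hattach hb ha (by omega) y hy x hx hyx hys).symm
    · exact of_mem_of_mem_of_lt (by omega) ha hb hcard hx hy hxs hys

lemma of_genus_pos {g : ℕ} (hg : 0 < g) (hmd : m + 1 ≤ d) (ha : IsPartitionOf a d)
    (hb : IsPartitionOf b d) (hcard : a.card + b.card + 2 * g = m + 2) : CycleStep m a b :=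
  add_genus (g := 1) hmd
    (fun _ _ ha hb h => of_genus_one hmd ha hb (by omega)) (g - 1) ha hb (by omega)

lemma to_singleton (ha : IsPartitionOf a d) (hcard : a.card = m + 1) : CycleStep m a {d} := by
  induction m generalizing a d with
  | zero =>
    obtain ⟨x, rfl⟩ := Multiset.card_eq_one.1 hcard
    obtain rfl : x = d := by simpa using ha.sum_eq
    exact singleton (ha.pos x (Multiset.mem_singleton_self x))
  | succ m ih =>
    obtain ⟨x, hx⟩ := Multiset.card_pos_iff_exists_mem.1 (show 0 < a.card by omega)
    obtain ⟨a, e, rfl, rfl, hx0, ha⟩ := ha.exists_eq_cons hx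
    exact (ih ha (by simpa using hcard)).cons hx0

lemma to_pair (ha : IsPartitionOf a d) (hcard : a.card = m + 1) (hmd : m + 1 < d) :
    CycleStep (m + 1) a {1, d - 1} := by
  obtain ⟨x, hx, hx1⟩ := ha.exists_lt_mem (c := 1) (by omega)
  obtain ⟨a, e, rfl, rfl, -, ha⟩ := ha.exists_eq_cons hx
  have h := to_singleton (ha.cons (x := x - 1) (by omega) rfl) (by simpa using hcard)
  rw [show x - 1 + e = x + e - 1 by omega] at h
  simpa [show 1 + (x - 1) = x by omega] using (h.symm.cons (x := 1) one_pos).symm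

end CycleStep

/-- A partition of `d` into one or two parts, according to the parity of `k`. -/
def shortPartition (d k : ℕ) : Multiset ℕ := if k % 2 = 0 then {d} else {1, d - 1}

lemma isPartitionOf_shortPartition {d : ℕ} (hd : 2 ≤ d) (k : ℕ) :
    IsPartitionOf (shortPartition d k) d := by
  unfold shortPartition
  split_ifs
  · exact .singleton (by omega)
  · exact (IsPartitionOf.singleton (by omega)).cons one_pos (by omega)

lemma shortPartition_congr {d k k' : ℕ} (h : k % 2 = k' % 2) :
    shortPartition d k = shortPartition d k' := by
  rw [shortPartition, shortPartition, h]

lemma card_shortPartition (d k : ℕ) : (shortPartition d k).card = k % 2 + 1 := by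
  unfold shortPartition
  split_ifs with h
  · simp [h]
  · simp [Nat.mod_two_ne_zero.1 h]

lemma CycleStep.to_shortPartition {m d : ℕ} {a : Multiset ℕ} (ha : IsPartitionOf a d)
    (hm : 0 < m) (hcard : a.card ≤ m + 1) (hmd : m + 1 ≤ d) :
    CycleStep m a (shortPartition d (m + a.card + 1)) := by
  obtain ⟨x, hx⟩ := ha.exists_mem (by omega)
  have hapos := Multiset.card_pos_iff_exists_mem.2 ⟨x, hx⟩
  by_cases hlt : a.card < m
  · refine of_genus_pos (g := (m + 1 - a.card) / 2) (by omega) hmd ha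
      (isPartitionOf_shortPartition (by omega) _) ?_
    rw [card_shortPartition]
    omega
  obtain hc | rfl : a.card = m + 1 ∨ a.card = m := by omega
  · rw [shortPartition, if_pos (by omega)]
    exact to_singleton ha hc
  · rw [shortPartition, if_neg (by omega)]
    obtain ⟨n, hn⟩ := Nat.exists_eq_succ_of_ne_zero hapos.ne'
    rw [hn]
    exact to_pair ha hn (by omega)

end SingleStep

section CycleChains

open Equiv Equiv.Perm

/-- The group generated by `s` is transitive. -/
def GeneratesTransitive {X : Type*} (s : Set (Perm X)) : Prop :=
  ∀ x y, ∃ π ∈ Subgroup.closure s, π x = y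

/-- An `(m + 1)`-cycle. The identity counts as a `1`-cycle. -/
def IsCycleOfIndex {X : Type*} (m : ℕ) (τ : Perm X) : Prop :=
  ∃ S : Finset X, S.card = m + 1 ∧ IsMarkedCycle τ S

lemma GeneratesTransitive.of_subset_closure {X : Type*} {s t : Set (Perm X)}
    (h : GeneratesTransitive s) (hst : s ⊆ Subgroup.closure t) : GeneratesTransitive t :=
  fun x y => (h x y).imp fun _ hπ => ⟨(Subgroup.closure_le _).2 hst hπ.1, hπ.2⟩

lemma IsMarkedCycle.permCongr {X Y : Type*} [Finite X] {κ : Perm Y} {S : Finset Y}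
    (h : IsMarkedCycle κ S) (e : Y ≃ X) :
    IsMarkedCycle (e.permCongr κ) (S.map e.toEmbedding) := by
  refine ⟨isCycleOn_map_of_semiconj (fun y => by simp) h.isCycleOn, fun x hx => ?_⟩
  rw [permCongr_apply, h.apply_of_notMem _ fun hmem => hx (by simpa using hmem), apply_symm_apply]

lemma IsMarkedCycle.generatesTransitive {X : Type*} {σ κ : Perm X} {S : Finset X}
    (hκ : IsMarkedCycle κ S) (hS : ∀ x, ∃ y ∈ S, σ.SameCycle x y) :
    GeneratesTransitive {σ, κ} := by
  intro x y
  obtain ⟨u, hu, i, hi⟩ := hS x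
  obtain ⟨v, hv, j, hj⟩ := hS y
  obtain ⟨k, hk⟩ := hκ.isCycleOn.2 hu hv
  have hσmem : σ ∈ Subgroup.closure {σ, κ} := Subgroup.subset_closure (by simp)
  have hκmem : κ ∈ Subgroup.closure {σ, κ} := Subgroup.subset_closure (by simp)
  refine ⟨(σ ^ j)⁻¹ * κ ^ k * σ ^ i, mul_mem (mul_mem (inv_mem (zpow_mem hσmem j))
    (zpow_mem hκmem k)) (zpow_mem hσmem i), ?_⟩
  rw [mul_apply, mul_apply, hi, hk, inv_eq_iff_eq, hj]

variable {X : Type*} [Fintype X] [DecidableEq X] {ms ms' : List ℕ} {a b c : Multiset ℕ} {m d : ℕ}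

variable (X) in
/-- Every permutation of `X` with cycle lengths `a` can be multiplied by consecutive cycles, of
lengths `m + 1` for `m ∈ ms`, so that the product has cycle lengths `b`. -/
def CycleChain (ms : List ℕ) (a b : Multiset ℕ) : Prop :=
  ∀ σ : Perm X, σ.partition.parts = a → ∃ τs : List (Perm X),
    List.Forall₂ IsCycleOfIndex ms τs ∧ (σ * τs.prod).partition.parts = b

variable (X) in
/-- A `CycleChain` in which the permutation and the cycles generate a transitive group. -/
def TransitiveCycleChain (ms : List ℕ) (a b : Multiset ℕ) : Prop :=
  ∀ σ : Perm X, σ.partition.parts = a → ∃ τs : List (Perm X),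
    List.Forall₂ IsCycleOfIndex ms τs ∧ (σ * τs.prod).partition.parts = b ∧
      GeneratesTransitive (insert σ {τ | τ ∈ τs})

lemma TransitiveCycleChain.cycleChain (h : TransitiveCycleChain X ms a b) : CycleChain X ms a b :=
  fun σ hσ => (h σ hσ).imp fun _ hτs => ⟨hτs.1, hτs.2.1⟩

lemma CycleChain.nil : CycleChain X [] a a := fun _ hσ => ⟨[], .nil, by simpa using hσ⟩

lemma CycleChain.append (h : CycleChain X ms a b) (h' : CycleChain X ms' b c) :
    CycleChain X (ms ++ ms') a c := fun σ hσ => by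
  obtain ⟨τs, hτs, hb⟩ := h σ hσ
  obtain ⟨τs', hτs', hc⟩ := h' _ hb
  exact ⟨τs ++ τs', List.rel_append hτs hτs', by rwa [List.prod_append, ← mul_assoc]⟩

lemma TransitiveCycleChain.append (h : TransitiveCycleChain X ms a b) (h' : CycleChain X ms' b c) :
    TransitiveCycleChain X (ms ++ ms') a c := fun σ hσ => by
  obtain ⟨τs, hτs, hb, htrans⟩ := h σ hσ
  obtain ⟨τs', hτs', hc⟩ := h' _ hb
  refine ⟨τs ++ τs', List.rel_append hτs hτs', by rwa [List.prod_append, ← mul_assoc],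
    htrans.of_subset_closure (subset_trans ?_ Subgroup.subset_closure)⟩
  exact Set.insert_subset_insert fun τ hτ => List.mem_append_left τs' hτ

lemma CycleChain.append_transitive (h : CycleChain X ms a b)
    (h' : TransitiveCycleChain X ms' b c) : TransitiveCycleChain X (ms ++ ms') a c := fun σ hσ => by
  obtain ⟨τs, hτs, hb⟩ := h σ hσ
  obtain ⟨τs', hτs', hc, htrans⟩ := h' _ hb
  refine ⟨τs ++ τs', List.rel_append hτs hτs', by rwa [List.prod_append, ← mul_assoc],
    htrans.of_subset_closure (Set.insert_subset ?_ fun τ hτ => ?_)⟩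
  · exact mul_mem (Subgroup.subset_closure (by simp)) (list_prod_mem fun τ hτ =>
      Subgroup.subset_closure (.inr (List.mem_append_left τs' hτ)))
  · exact Subgroup.subset_closure (.inr (List.mem_append_right τs hτ))

lemma CycleStep.transitiveCycleChain (h : CycleStep m a b) : TransitiveCycleChain X [m] a b := by
  rintro σ' hσ'
  obtain ⟨Y, _, _, σ, κ, S, hcard, hκ, hS, ha, hb⟩ := h
  obtain ⟨e, rfl⟩ := exists_permCongr_eq (ha.trans hσ'.symm)
  have hS' : ∀ x, ∃ y ∈ S.map e.toEmbedding, (e.permCongr σ).SameCycle x y := fun x => by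
    obtain ⟨y, hy, hxy⟩ := hS (e.symm x)
    refine ⟨e y, Finset.mem_map_of_mem _ hy, ?_⟩
    simpa using sameCycle_of_semiconj (τ := e.permCongr σ) (f := e) (fun y => by simp) hxy
  refine ⟨[e.permCongr κ], .cons ⟨_, by simpa using hcard, hκ.permCongr e⟩ .nil, ?_, ?_⟩
  · rwa [List.prod_singleton, ← permCongr_mul, parts_partition_permCongr]
  · simpa using (hκ.permCongr e).generatesTransitive hS'

lemma CycleStep.cycleChain_add (h : CycleStep m a b) (hc : ∀ x ∈ c, 0 < x) :
    CycleChain X [m] (a + c) (b + c) := by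
  rintro σ' hσ'
  obtain ⟨Y, _, _, σ, κ, S, hcard, hκ, _, rfl, rfl⟩ := h
  obtain ⟨Z, _, _, ρ, rfl⟩ := exists_perm_parts_partition_eq hc
  rw [← parts_partition_sumCongr] at hσ'
  obtain ⟨e, rfl⟩ := exists_permCongr_eq hσ'.symm
  refine ⟨[e.permCongr (Perm.sumCongr κ 1)],
    .cons ⟨_, by simpa using hcard, (hκ.sumCongr_one Z).permCongr e⟩ .nil, ?_⟩
  rw [List.prod_singleton, ← permCongr_mul, parts_partition_permCongr, Perm.sumCongr_mul, mul_one,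
    parts_partition_sumCongr]

lemma IsPartitionOf.exists_cycleChain_merge (ha : IsPartitionOf a d) (hcard : m + 1 ≤ a.card) :
    ∃ c, IsPartitionOf c d ∧ c.card + m = a.card ∧
      CycleChain X [m] a c ∧ CycleChain X [m] c a := by
  have hsub : 0 < (Multiset.powersetCard (m + 1) a).card := by
    rw [Multiset.card_powersetCard]
    exact Nat.choose_pos hcard
  obtain ⟨t, hmem⟩ := Multiset.card_pos_iff_exists_mem.1 hsub
  obtain ⟨hta, ht⟩ := Multiset.mem_powersetCard.1 hmem
  obtain ⟨r, rfl⟩ := Multiset.le_iff_exists_add.1 hta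
  have ht' : IsPartitionOf t t.sum := ⟨fun x hx => ha.pos x (by simp [hx]), rfl⟩
  have hr : IsPartitionOf r r.sum := ⟨fun x hx => ha.pos x (by simp [hx]), rfl⟩
  have hstep := CycleStep.to_singleton ht' ht
  have htpos : 0 < t.sum := by
    have := ht'.card_le
    omega
  have hd : d = t.sum + r.sum := by rw [← ha.sum_eq, Multiset.sum_add]
  exact ⟨{t.sum} + r, hd ▸ (singleton htpos).add hr,
    by rw [Multiset.card_add, Multiset.card_add, Multiset.card_singleton]; omega,
    hstep.cycleChain_add hr.pos, hstep.symm.cycleChain_add hr.pos⟩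

lemma cycleChain_shortPartition (hms : ∀ m ∈ ms, 0 < m ∧ m + 1 ≤ d) (k : ℕ) :
    CycleChain X ms (shortPartition d (ms.sum + k)) (shortPartition d k) := by
  induction ms with
  | nil => simpa using CycleChain.nil
  | cons m ms ih =>
    obtain ⟨⟨hm, hmd⟩, hms⟩ := List.forall_mem_cons.1 hms
    have hshort := isPartitionOf_shortPartition (d := d) (by omega) (ms.sum + k)
    have hcard := card_shortPartition d (ms.sum + k)
    have hstep := CycleStep.to_shortPartition hshort hm (by omega) hmd
    rw [shortPartition_congr (k := m + _ + 1) (k' := (m :: ms).sum + k)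
      (by rw [List.sum_cons]; omega)] at hstep
    exact hstep.symm.transitiveCycleChain.cycleChain.append (ih hms)

lemma IsPartitionOf.cycleChain_of_shortPartition (hb : IsPartitionOf b d) (hd : 0 < d)
    (hms : ∀ m ∈ ms, 0 < m ∧ m + 1 ≤ d) (hcard : b.card ≤ ms.sum + 1) :
    CycleChain X ms (shortPartition d (ms.sum + b.card + 1)) b := by
  induction ms using List.reverseRecOn generalizing b with
  | nil =>
    obtain ⟨x, hx⟩ := hb.exists_mem hd
    have hpos := Multiset.card_pos_iff_exists_mem.2 ⟨x, hx⟩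
    obtain ⟨x, rfl⟩ := Multiset.card_eq_one.1 (hcard.antisymm hpos)
    obtain rfl : x = d := by simpa using hb.sum_eq
    simpa [shortPartition] using CycleChain.nil
  | append_singleton ms m ih =>
    obtain ⟨hms, hm⟩ := List.forall_mem_append.1 hms
    obtain ⟨hm, hmd⟩ := hm m (List.mem_singleton_self m)
    rw [List.sum_append, List.sum_singleton] at hcard ⊢
    by_cases hbm : b.card ≤ m + 1
    · have hstep := CycleStep.to_shortPartition hb hm hbm hmd
      have hchain := cycleChain_shortPartition (X := X) hms (m + b.card + 1)
      rw [show ms.sum + (m + b.card + 1) = ms.sum + m + b.card + 1 by omega] at hchain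
      exact hchain.append hstep.symm.transitiveCycleChain.cycleChain
    · obtain ⟨c, hc, hcard', -, hchain⟩ := hb.exists_cycleChain_merge (X := X) (m := m) (by omega)
      have hreach := ih hc hms (by omega)
      rw [shortPartition_congr (k' := ms.sum + m + b.card + 1) (by omega)] at hreach
      exact hreach.append hchain

lemma IsPartitionOf.exists_cycleChain_split (hb : IsPartitionOf b d) (hcard : ms.sum + 1 ≤ b.card) :
    ∃ c, IsPartitionOf c d ∧ c.card + ms.sum = b.card ∧ CycleChain X ms c b := by
  induction ms using List.reverseRecOn generalizing b with
  | nil => exact ⟨b, hb, rfl, CycleChain.nil⟩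
  | append_singleton ms m ih =>
    rw [List.sum_append, List.sum_singleton] at hcard ⊢
    obtain ⟨c, hc, hcm, -, hcb⟩ := hb.exists_cycleChain_merge (X := X) (m := m) (by omega)
    obtain ⟨e, he, hec, hchain⟩ := ih hc (by omega)
    exact ⟨e, he, by omega, hchain.append hcb⟩

/-- Parts of `a` are merged as long as possible; the first cycle too long for that takes care of the
positive genus and of transitivity. -/
theorem IsPartitionOf.transitiveCycleChain {g : ℕ} (ha : IsPartitionOf a d) (hb : IsPartitionOf b d)
    (hd : 0 < d) (hg : 0 < g) (hms : ∀ m ∈ ms, 0 < m ∧ m + 1 ≤ d)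
    (hcard : a.card + b.card + 2 * g = ms.sum + 2) : TransitiveCycleChain X ms a b := by
  have hbpos := Multiset.card_pos_iff_exists_mem.2 (hb.exists_mem hd)
  induction ms generalizing a with
  | nil =>
    have := Multiset.card_pos_iff_exists_mem.2 (ha.exists_mem hd)
    rw [List.sum_nil] at hcard
    omega
  | cons m ms ih =>
    obtain ⟨⟨hm, hmd⟩, hms⟩ := List.forall_mem_cons.1 hms
    rw [List.sum_cons] at hcard
    by_cases ham : m + 1 ≤ a.card
    · obtain ⟨c, hc, hcm, hac, -⟩ := ha.exists_cycleChain_merge (X := X) ham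
      exact hac.append_transitive (ih hc hms (by omega))
    by_cases hbms : b.card ≤ ms.sum + 1
    · have hstep := CycleStep.to_shortPartition ha hm (by omega) hmd
      have hreach := hb.cycleChain_of_shortPartition (X := X) hd hms hbms
      rw [shortPartition_congr (k' := m + a.card + 1) (by omega)] at hreach
      exact hstep.transitiveCycleChain.append hreach
    · obtain ⟨c, hc, hcb, hchain⟩ := hb.exists_cycleChain_split (X := X) (ms := ms) (by omega)
      exact (CycleStep.of_genus_pos hg hmd ha hc
        (by omega)).transitiveCycleChain.append hchain

end CycleChains

section FiberwisePermutations

open Equiv Equiv.Perm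

variable {ι X : Type*} [Fintype X] [DecidableEq X]

lemma IsMarkedCycle.parts_partition {κ : Perm X} {S : Finset X} (h : IsMarkedCycle κ S)
    (hS : S.Nonempty) :
    κ.partition.parts = S.card ::ₘ Multiset.replicate (Fintype.card X - S.card) 1 := by
  have hfamily : IsCycleFamily κ (S ::ₘ Sᶜ.val.map singleton) := by
    refine ⟨?_, ?_, ?_⟩
    · rw [Multiset.cons_bind, Multiset.bind_map]
      have hbind : (Sᶜ.val.bind fun x => ({x} : Finset X).val) = Sᶜ.val := by
        simpa using Sᶜ.val.bind_singleton id
      have hdisj : Disjoint S Sᶜ := disjoint_compl_right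
      rw [hbind, Multiset.add_eq_union_iff_disjoint.2 (Finset.disjoint_val.2 hdisj),
        ← Finset.union_val, Finset.union_compl]
    · simp [hS]
    · simp only [Multiset.mem_cons, Multiset.mem_map, Finset.mem_val, Finset.mem_compl]
      rintro _ (rfl | ⟨x, hx, rfl⟩)
      · exact h.isCycleOn
      · simpa using h.apply_of_notMem x hx
  rw [hfamily.parts_partition, ← Finset.card_compl]
  simp

lemma parts_partition_prodCongrRight [Fintype ι] [DecidableEq ι] (T : ι → Perm X) :
    (partition (Equiv.prodCongrRight T)).parts =
      Finset.univ.val.bind fun i => (T i).partition.parts := by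
  choose M hM using fun i => exists_isCycleFamily (T i)
  have hfamily : IsCycleFamily (Equiv.prodCongrRight T)
      (Finset.univ.val.bind fun i => (M i).map (Finset.map (Function.Embedding.sectR i X))) := by
    refine ⟨?_, ?_, ?_⟩
    · rw [Multiset.bind_assoc]
      simp only [Multiset.bind_map, Finset.map_val]
      simp only [← Multiset.map_bind, (hM _).bind_val]
      rfl
    · simp only [Multiset.mem_bind, Multiset.mem_map]
      rintro _ ⟨i, -, s, hs, rfl⟩
      exact ((hM i).nonempty s hs).map
    · simp only [Multiset.mem_bind, Multiset.mem_map]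
      rintro _ ⟨i, -, s, hs, rfl⟩
      exact isCycleOn_map_of_semiconj (fun x => rfl) ((hM i).isCycleOn s hs)
  rw [hfamily.parts_partition, Multiset.map_bind]
  simp [(hM _).parts_partition]

lemma parts_partition_prodCongrRight_of_isCycleOfIndex [Fintype ι] [DecidableEq ι] {m : ι → ℕ}
    {T : ι → Perm X} (hT : ∀ i, IsCycleOfIndex (m i) (T i)) :
    (partition (Equiv.prodCongrRight T)).parts =
      Finset.univ.val.map (fun i => m i + 1) +
        Multiset.replicate (Fintype.card ι * Fintype.card X - ∑ i, (m i + 1)) 1 := by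
  choose S hcard hS using hT
  have hparts : ∀ i, (T i).partition.parts =
      (m i + 1) ::ₘ Multiset.replicate (Fintype.card X - (m i + 1)) 1 := fun i => by
    rw [(hS i).parts_partition (Finset.card_pos.1 (hcard i ▸ Nat.succ_pos _)), hcard i]
  have hsum : ∑ i, (Fintype.card X - (m i + 1)) =
      Fintype.card ι * Fintype.card X - ∑ i, (m i + 1) := by
    rw [Finset.sum_tsub_distrib _ fun i _ => hcard i ▸ (S i).card_le_univ]
    simp
  rw [parts_partition_prodCongrRight, ← hsum]
  simp only [hparts, Multiset.bind_cons]
  congr 1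
  refine Multiset.eq_replicate.2 ⟨by simp [Multiset.card_bind], fun k hk => ?_⟩
  obtain ⟨i, -, hki⟩ := Multiset.mem_bind.1 hk
  exact Multiset.eq_of_mem_replicate hki

end FiberwisePermutations

section CyclicLift

open Equiv Equiv.Perm

variable {X : Type*} {n : ℕ}

/-- The lift of a permutation `F` of `X` to `n + 1` copies of `X`: it moves every sheet down by
one, and returns the lowest sheet `0` to the highest one through `F`. -/
def cyclicLift (n : ℕ) (F : Perm X) : Perm (Fin (n + 1) × X) :=
  Equiv.prodShear (finRotate (n + 1)).symm fun i => if i = 0 then F else 1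

lemma cyclicLift_apply_zero (F : Perm X) (x : X) :
    cyclicLift n F (0, x) = (Fin.last n, F x) := by
  have hrot : (finRotate (n + 1)).symm 0 = Fin.last n :=
    (symm_apply_eq _).2 finRotate_last.symm
  simp only [cyclicLift, prodShear_apply, hrot, if_pos]

lemma cyclicLift_apply_succ (F : Perm X) (i : Fin n) (x : X) :
    cyclicLift n F (i.succ, x) = (i.castSucc, x) := by
  have hrot : (finRotate (n + 1)).symm i.succ = i.castSucc :=
    (symm_apply_eq _).2 (by simp)
  simp only [cyclicLift, prodShear_apply, hrot, Fin.succ_ne_zero, if_false, one_apply]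

lemma cyclicLift_pow_apply (F : Perm X) (i : Fin (n + 1)) (x : X) :
    (cyclicLift n F ^ (i : ℕ)) (i, x) = (0, x) := by
  induction i using Fin.induction with
  | zero => simp
  | succ i ih => rw [Fin.val_succ, pow_succ, mul_apply, cyclicLift_apply_succ, ← ih]; rfl

lemma cyclicLift_pow_succ_apply_zero (F : Perm X) (x : X) :
    (cyclicLift n F ^ (n + 1)) (0, x) = (0, F x) := by
  rw [pow_succ, mul_apply, cyclicLift_apply_zero]
  exact cyclicLift_pow_apply F (Fin.last n) (F x)

lemma sameCycle_cyclicLift {F : Perm X} [Finite X] {x y : X} (h : F.SameCycle x y)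
    (i j : Fin (n + 1)) : (cyclicLift n F).SameCycle (i, x) (j, y) := by
  have hsheet : ∀ (k : Fin (n + 1)) z, (cyclicLift n F).SameCycle (k, z) (0, z) := fun k z =>
    ⟨(k : ℕ), by rw [zpow_natCast, cyclicLift_pow_apply]⟩
  have hzero : (cyclicLift n F).SameCycle (0, x) (0, y) := by
    refine SameCycle.of_pow (n := n + 1) ?_
    exact sameCycle_of_semiconj (f := fun z => ((0 : Fin (n + 1)), z))
      (fun z => (cyclicLift_pow_succ_apply_zero F z).symm) h
  exact (hsheet i x).trans (hzero.trans (hsheet j y).symm)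

lemma isCycleOn_cyclicLift [Finite X] {F : Perm X} {s : Finset X} (h : F.IsCycleOn s) :
    (cyclicLift n F).IsCycleOn (Finset.univ ×ˢ s : Finset (Fin (n + 1) × X)) := by
  refine isCycleOn_of_mapsTo_of_sameCycle ?_ ?_
  · rintro ⟨i, x⟩ hx
    have hxs : x ∈ s := by simpa using hx
    cases i using Fin.cases with
    | zero => simpa [cyclicLift_apply_zero] using h.apply_mem_iff.2 hxs
    | succ i => simpa [cyclicLift_apply_succ] using hxs
  · rintro ⟨i, x⟩ hx ⟨j, y⟩ hy
    exact sameCycle_cyclicLift (h.2 (by simpa using hx) (by simpa using hy)) i j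

lemma GeneratesTransitive.lift {σ : Perm X} {T : Fin (n + 1) → Perm X}
    (h : GeneratesTransitive (insert σ (Set.range T))) :
    GeneratesTransitive {cyclicLift n σ, Equiv.prodCongrRight T} := by
  set R := cyclicLift n σ
  set G := Subgroup.closure {R, Equiv.prodCongrRight T}
  have hR : R ∈ G := Subgroup.subset_closure (by simp)
  have hT : Equiv.prodCongrRight T ∈ G := Subgroup.subset_closure (by simp)
  have hsheet : ∀ f ∈ Subgroup.closure (insert σ (Set.range T)),
      ∃ π ∈ G, ∀ x, π (0, x) = (0, f x) := fun f hf => by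
    induction hf using Subgroup.closure_induction with
    | mem f hf =>
      rcases hf with rfl | ⟨i, rfl⟩
      · exact ⟨R ^ (n + 1), pow_mem hR _, cyclicLift_pow_succ_apply_zero f⟩
      · refine ⟨R ^ (i : ℕ) * Equiv.prodCongrRight T * (R ^ (i : ℕ))⁻¹,
          mul_mem (mul_mem (pow_mem hR _) hT) (inv_mem (pow_mem hR _)), fun x => ?_⟩
        rw [mul_apply, mul_apply, inv_eq_iff_eq.2 (cyclicLift_pow_apply σ i x).symm]
        exact cyclicLift_pow_apply σ i (T i x)
    | one => exact ⟨1, one_mem G, fun x => rfl⟩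
    | mul f f' _ _ ih ih' =>
      obtain ⟨π, hπ, hπf⟩ := ih
      obtain ⟨π', hπ', hπf'⟩ := ih'
      exact ⟨π * π', mul_mem hπ hπ', fun x => by rw [mul_apply, hπf', hπf, mul_apply]⟩
    | inv f _ ih =>
      obtain ⟨π, hπ, hπf⟩ := ih
      exact ⟨π⁻¹, inv_mem hπ, fun x => by
        rw [inv_eq_iff_eq, hπf, ← mul_apply, mul_inv_cancel, one_apply]⟩
  rintro ⟨i, x⟩ ⟨j, y⟩
  obtain ⟨f, hf, rfl⟩ := h x y
  obtain ⟨π, hπ, hπf⟩ := hsheet f hf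
  refine ⟨(R ^ (j : ℕ))⁻¹ * π * R ^ (i : ℕ),
    mul_mem (mul_mem (inv_mem (pow_mem hR _)) hπ) (pow_mem hR _), ?_⟩
  rw [mul_apply, mul_apply, cyclicLift_pow_apply, hπf, inv_eq_iff_eq, cyclicLift_pow_apply]

lemma isConj_cyclicLift_mul_prodCongrRight (σ : Perm X) (T : Fin (n + 1) → Perm X) :
    IsConj (cyclicLift n (σ * (List.ofFn T).prod))
      (cyclicLift n σ * Equiv.prodCongrRight T) := by
  set f : Fin (n + 1) → Perm X := fun i => ((List.ofFn T).drop (i + 1)).prod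
  have hf : ∀ i, T i * f i = ((List.ofFn T).drop i).prod := fun i => by
    rw [List.drop_eq_getElem_cons (by simpa using i.2), List.prod_cons, List.getElem_ofFn]
  refine isConj_iff.2 ⟨Equiv.prodCongrRight f, mul_inv_eq_iff_eq_mul.2 (Equiv.ext ?_)⟩
  rintro ⟨i, x⟩
  simp only [mul_apply, Equiv.prodCongrRight_apply]
  cases i using Fin.cases with
  | zero =>
    have hlast : f (Fin.last n) = 1 := by
      simp only [f, Fin.val_last, List.drop_of_length_le (List.length_ofFn (f := T)).le,
        List.prod_nil]
    rw [cyclicLift_apply_zero, cyclicLift_apply_zero, Equiv.prodCongrRight_apply, hlast,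
      ← mul_apply (T 0), hf]
    rfl
  | succ i =>
    rw [cyclicLift_apply_succ, cyclicLift_apply_succ, Equiv.prodCongrRight_apply,
      ← mul_apply (T _), hf]
    rfl

variable [Fintype X] [DecidableEq X]

lemma parts_partition_cyclicLift (F : Perm X) :
    (cyclicLift n F).partition.parts = F.partition.parts.map ((n + 1) * ·) := by
  obtain ⟨M, hM⟩ := exists_isCycleFamily F
  have hfamily : IsCycleFamily (cyclicLift n F) (M.map (Finset.univ ×ˢ ·)) := by
    refine ⟨?_, ?_, ?_⟩
    · rw [Multiset.bind_map]
      refine (Multiset.bind_bind M Finset.univ.val (f := fun s i => s.val.map (Prod.mk i))).trans ?_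
      simp only [← Multiset.map_bind, hM.bind_val]
      rfl
    · simp only [Multiset.mem_map]
      rintro _ ⟨s, hs, rfl⟩
      exact Finset.univ_nonempty.product (hM.nonempty s hs)
    · simp only [Multiset.mem_map]
      rintro _ ⟨s, hs, rfl⟩
      exact isCycleOn_cyclicLift (hM.isCycleOn s hs)
  simp [hfamily.parts_partition, hM.parts_partition]

end CyclicLift

section BranchData

open Equiv Equiv.Perm

/-- The branch data `(a, b, c)` of a Belyi function is realised by a transitive monodromy triple on
the fibre `Y`. -/
def IsRealizableOn (Y : Type*) [Fintype Y] [DecidableEq Y] (a b c : Multiset ℕ) : Prop :=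
  ∃ π₁ π₂ π₃ : Perm Y, π₁ * π₂ * π₃ = 1 ∧ π₁.partition.parts = a ∧ π₂.partition.parts = b ∧
    π₃.partition.parts = c ∧ GeneratesTransitive {π₁, π₂, π₃}

variable {X Y : Type*} [Fintype X] [DecidableEq X] [Fintype Y] [DecidableEq Y]
  {a b c : Multiset ℕ} {n : ℕ}

lemma IsRealizableOn.congr (h : IsRealizableOn X a b c) (e : X ≃ Y) : IsRealizableOn Y a b c := by
  obtain ⟨π₁, π₂, π₃, hprod, h₁, h₂, h₃, htrans⟩ := h
  refine ⟨e.permCongr π₁, e.permCongr π₂, e.permCongr π₃, ?_, ?_, ?_, ?_, fun x y => ?_⟩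
  · rw [← permCongr_mul, ← permCongr_mul, hprod]
    exact map_one e.permCongrHom
  · rwa [parts_partition_permCongr]
  · rwa [parts_partition_permCongr]
  · rwa [parts_partition_permCongr]
  · obtain ⟨π, hπ, hxy⟩ := htrans (e.symm x) (e.symm y)
    refine ⟨e.permCongr π, ?_, by simp [permCongr_apply, hxy]⟩
    have hmap := Subgroup.mem_map_of_mem e.permCongrHom.toMonoidHom hπ
    rw [MonoidHom.map_closure] at hmap
    simpa [Set.image_insert_eq] using hmap

lemma exists_eq_ofFn_of_forall₂ {α β : Type*} {R : α → β → Prop} {m : Fin n → α} {l : List β}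
    (h : List.Forall₂ R (List.ofFn m) l) :
    ∃ T : Fin n → β, l = List.ofFn T ∧ ∀ i, R (m i) (T i) := by
  have hlen : n = l.length := by simpa using h.length_eq
  subst hlen
  refine ⟨l.get, (List.ofFn_get l).symm, fun i => ?_⟩
  simpa using h.get (i := i) (by simp) i.2

lemma TransitiveCycleChain.isRealizableOn {m : Fin (n + 1) → ℕ} {σ : Perm X}
    (h : TransitiveCycleChain X (List.ofFn m) a b) (hσ : σ.partition.parts = a) :
    IsRealizableOn (Fin (n + 1) × X) (a.map ((n + 1) * ·)) (b.map ((n + 1) * ·))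
      (Finset.univ.val.map (fun i => m i + 1) +
        Multiset.replicate ((n + 1) * Fintype.card X - ∑ i, (m i + 1)) 1) := by
  obtain ⟨τs, hτs, hb, htrans⟩ := h σ hσ
  obtain ⟨T, rfl, hT⟩ := exists_eq_ofFn_of_forall₂ hτs
  set π₁ := cyclicLift n σ
  set π₃ : Perm (Fin (n + 1) × X) := Equiv.prodCongrRight T
  refine ⟨π₁, π₁⁻¹ * π₃⁻¹, π₃, by group, ?_, ?_, ?_, ?_⟩
  · rw [parts_partition_cyclicLift, hσ]
  · have hconj : IsConj (π₁ * π₃)⁻¹ (π₁⁻¹ * π₃⁻¹) := isConj_iff.2 ⟨π₁⁻¹, by group⟩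
    rw [parts_partition_of_isConj hconj, parts_partition_inv,
      parts_partition_of_isConj (isConj_cyclicLift_mul_prodCongrRight σ T),
      parts_partition_cyclicLift, hb]
  · simpa using parts_partition_prodCongrRight_of_isCycleOfIndex hT
  · have hrange : {τ | τ ∈ List.ofFn T} = Set.range T :=
      Set.ext fun τ => List.mem_ofFn
    refine (hrange ▸ htrans).lift.of_subset_closure
      (subset_trans ?_ Subgroup.subset_closure)
    exact Set.insert_subset (by simp [π₁]) (by simp [π₃])

end BranchData

lemma fullCycleType_eq_parts_partition {n : ℕ} (σ : Equiv.Perm (Fin n)) :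
    fullCycleType σ = σ.partition.parts := by
  rw [Equiv.Perm.parts_partition, Fintype.card_fin, fullCycleType]

/-- The monodromy content of Corollary 1.2: with `d, ℓ, g` positive,
partitions `(a₁,…,a_p)`, `(b₁,…,b_q)` of `d` and `(m₁,…,m_ℓ)` of
`p + q - 2 + 2g` with each `mᵢ + 1 ≤ d`, there exist `π₁, π₂, π₃` in the
symmetric group on `ℓd` letters with `π₁ π₂ π₃ = id`, of cycle types
`(ℓa₁,…,ℓa_p)`, `(ℓb₁,…,ℓb_q)` and `(m₁+1,…,m_ℓ+1,1,…,1)` respectively,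
generating a transitive subgroup. -/
theorem cor_1_2 (d ℓ g p q : ℕ) (hd : 0 < d) (hℓ : 0 < ℓ) (hg : 0 < g)
    (hp : 0 < p) (hq : 0 < q)
    (a : Fin p → ℕ) (b : Fin q → ℕ) (m : Fin ℓ → ℕ)
    (ha : ∀ i, 0 < a i) (hb : ∀ i, 0 < b i) (hm : ∀ i, 0 < m i)
    (hsa : ∑ i, a i = d) (hsb : ∑ i, b i = d)
    (hsm : ∑ i, m i = p + q - 2 + 2 * g)
    (hmd : ∀ i, m i + 1 ≤ d) :
    ∃ (π₁ π₂ π₃ : Equiv.Perm (Fin (ℓ * d))),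
      π₁ * π₂ * π₃ = 1 ∧
      fullCycleType π₁ = Finset.univ.val.map (fun i => ℓ * a i) ∧
      fullCycleType π₂ = Finset.univ.val.map (fun i => ℓ * b i) ∧
      fullCycleType π₃ =
        Finset.univ.val.map (fun i => m i + 1) +
          Multiset.replicate (ℓ * d - ∑ i, (m i + 1)) 1 ∧
      (∀ x y : Fin (ℓ * d),
        ∃ π ∈ Subgroup.closure ({π₁, π₂, π₃} : Set (Equiv.Perm (Fin (ℓ * d)))),
          π x = y) := by
  have ha' : IsPartitionOf (Finset.univ.val.map a) d := ⟨by simpa using ha, hsa⟩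
  have hb' : IsPartitionOf (Finset.univ.val.map b) d := ⟨by simpa using hb, hsb⟩
  obtain ⟨X, _, _, σ, hσ⟩ := exists_perm_parts_partition_eq ha'.pos
  obtain rfl : Fintype.card X = d := by rw [← σ.partition.parts_sum, hσ, ha'.sum_eq]
  obtain ⟨n, rfl⟩ := Nat.exists_eq_add_one.2 hℓ
  have hms : ∀ k ∈ List.ofFn m, 0 < k ∧ k + 1 ≤ Fintype.card X := by
    rw [List.forall_mem_ofFn_iff]
    exact fun i => ⟨hm i, hmd i⟩
  have hchain : TransitiveCycleChain X (List.ofFn m) _ _ :=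
    ha'.transitiveCycleChain hb' hd hg hms (by
      simp only [Multiset.card_map, Finset.card_val, Finset.card_univ, Fintype.card_fin,
        List.sum_ofFn]
      omega)
  have e : Fin (n + 1) × X ≃ Fin ((n + 1) * Fintype.card X) :=
    Fintype.equivFinOfCardEq (by simp)
  obtain ⟨π₁, π₂, π₃, hprod, h₁, h₂, h₃, htrans⟩ := (hchain.isRealizableOn hσ).congr e
  simp only [Multiset.map_map, Function.comp_def] at h₁ h₂
  refine ⟨π₁, π₂, π₃, hprod, ?_, ?_, ?_, htrans⟩ <;> rwa [fullCycleType_eq_parts_partition]
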